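/- Let m, n ∈ ℕ, let i, j ∈ {1, …, m} be indices and σ_i, σ_j ∈ Bool signs, let z₀ ∈ {1, …, n} be a distinguished index with χ(z₀) ∈ 𝔽₂ⁿ the corresponding standard basis vector, let ξ : Bool × Bool → 𝔽₂ⁿ be any map, let ℓ : Bool × Bool → 𝔽₂ satisfy ℓ(a,b) = ℓ(¬a,¬b) for all a, b, and let A(ε) be a family of n×n matrices over 𝔽₂ indexed by sign vectors ε ∈ Bool^m. Define the family of (n+2)×(n+2) matrices A'(ε) = [[A(ε), δ(ε_i = ¬σ_i)·χ(z₀), ξ(ε_i, ε_j)], [δ(ε_i = σ_i)·χ(z₀)ᵀ, 0, δ(ε_i = σ_i)·δ(ε_j = σ_j)], [ξ(¬ε_i, ¬ε_j)ᵀ, δ(ε_i = ¬σ_i)·δ(ε_j = ¬σ_j), ℓ(ε_i, ε_j)]]. Let E ⊆ Bool^m be a finite set of even cardinality, and set n_e = #{ε ∈ E : ε_i = σ_i, ε_j = σ_j} + #{ε ∈ E : ε_i = ¬σ_i, ε_j = ¬σ_j}. If n_e is even then S^E(A') = 4·S^E(A), and if n_e is odd then S^E(A') = 2·S^E(A); in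 particular S^E(A') and S^E(A) always have the same sign. (This is the effect of the move (T5) on generalized Seifert matrices.) -/

import Mathlib

open Matrix

/-- The Gauss sum `S(A) = Σ_{x ∈ 𝔽₂ⁿ} (-1)^{xᵀAx}` of a square matrix over `𝔽₂`. -/
def matGaussSum {ι : Type*} [Fintype ι] [DecidableEq ι] (A : Matrix ι ι (ZMod 2)) : ℤ :=
  ∑ x : ι → ZMod 2, if x ⬝ᵥ A.mulVec x = 0 then 1 else -1

/-- The Gauss sum `S^E(A)` of the sum `A^E = Σ_{ε ∈ E} A(ε)` of a family of matrices over
`𝔽₂` indexed by sign vectors. -/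
def famGaussSum {m : ℕ} {ι : Type*} [Fintype ι] [DecidableEq ι]
    (E : Finset (Fin m → Bool)) (A : (Fin m → Bool) → Matrix ι ι (ZMod 2)) : ℤ :=
  matGaussSum (∑ ε ∈ E, A ε)

/-!
Write `a, b` for the two new coordinates. Since `#E` is even, the two borders of `A'^E` parallel to
`χ(z₀)` coincide, so `a` enters the quadratic form of `A'^E` only through the term `n_e * a * b`.

If `n_e` is odd, summing over `a` kills every term with `b = 1`, and the terms with `b = 0` add up
to `2 * S^E(A)`. If `n_e` is even, the remaining coefficients of `b` are sums over `E` of functions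
of `(ε_i, ε_j)` invariant under negating both signs; such a function takes one value on the `n_e`
vectors with `(ε_i, ε_j) = ±(σ_i, σ_j)` and one value on the evenly many others, so its sum over `E`
vanishes. The form then does not involve `a` and `b` at all, and the sum is `4 * S^E(A)`.
-/

/-- The sign `(-1)^t ∈ ℤ` of `t ∈ 𝔽₂`, the summand of the Gauss sums. -/
def zmodTwoSign (t : ZMod 2) : ℤ :=
  if t = 0 then 1 else -1

theorem sum_zmodTwoSign_add_mul (s t : ZMod 2) :
    ∑ a, zmodTwoSign (s + a * t) = if t = 0 then 2 * zmodTwoSign s else 0 := by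
  revert s t
  decide

section Border

variable {ι R : Type*}

/-- The matrix `[[A, u, v], [p, 0, c], [q, d, e]]` obtained from `A` by adding two columns `u, v`
and two rows `p, q`, with zero first entry in the new diagonal block; both
`A'(ε)` and `A'^E` have this shape. -/
def doubleBorder [Zero R] (A : Matrix ι ι R) (u v p q : ι → R) (c d e : R) :
    Matrix (ι ⊕ Fin 2) (ι ⊕ Fin 2) R :=
  Matrix.fromBlocks A (Matrix.of fun x k => ![u x, v x] k) (Matrix.of fun k x => ![p x, q x] k)
    !![0, c; d, e]

theorem sum_doubleBorder [AddCommMonoid R] {α : Type*} (E : Finset α) (A : α → Matrix ι ι R)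
    (u v p q : α → ι → R) (c d e : α → R) :
    ∑ ε ∈ E, doubleBorder (A ε) (u ε) (v ε) (p ε) (q ε) (c ε) (d ε) (e ε) =
      doubleBorder (∑ ε ∈ E, A ε) (∑ ε ∈ E, u ε) (∑ ε ∈ E, v ε) (∑ ε ∈ E, p ε) (∑ ε ∈ E, q ε)
        (∑ ε ∈ E, c ε) (∑ ε ∈ E, d ε) (∑ ε ∈ E, e ε) := by
  ext (x | k) (y | k')
  · simp [doubleBorder, Matrix.sum_apply]
  · fin_cases k' <;> simp [doubleBorder, Matrix.sum_apply]
  · fin_cases k <;> simp [doubleBorder, Matrix.sum_apply]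
  · fin_cases k <;> fin_cases k' <;> simp [doubleBorder, Matrix.sum_apply]

theorem dotProduct_doubleBorder_mulVec [Fintype ι] [CommRing R] (A : Matrix ι ι R)
    (u v p q : ι → R) (c d e : R) (x : ι → R) (a b : R) :
    Sum.elim x ![a, b] ⬝ᵥ doubleBorder A u v p q c d e *ᵥ Sum.elim x ![a, b] =
      x ⬝ᵥ A *ᵥ x + a * ((u + p) ⬝ᵥ x) + b * ((v + q) ⬝ᵥ x + b * e) + a * (b * (c + d)) := by
  have mulVec_columns : (Matrix.of fun x k => ![u x, v x] k) *ᵥ ![a, b] = a • u + b • v := by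
    ext y
    simp [Matrix.mulVec, dotProduct, mul_comm]
  have mulVec_rows : (Matrix.of fun k x => ![p x, q x] k) *ᵥ x = ![p ⬝ᵥ x, q ⬝ᵥ x] := by
    ext k
    fin_cases k <;> rfl
  have mulVec_corner : !![0, c; d, e] *ᵥ ![a, b] = ![c * b, d * a + e * b] := by
    ext k
    fin_cases k <;> simp [Matrix.mulVec, dotProduct]
  simp only [doubleBorder, Matrix.fromBlocks_mulVec, Sum.elim_comp_inl, Sum.elim_comp_inr,
    mulVec_columns, mulVec_rows, mulVec_corner, sumElim_dotProduct_sumElim, dotProduct_add,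
    add_dotProduct, dotProduct_smul, smul_eq_mul, dotProduct_comm x u, dotProduct_comm x v,
    Matrix.vec2_dotProduct']
  ring

theorem sum_sumArrow_finTwo [Fintype ι] [DecidableEq ι] [Fintype R] {M : Type*} [AddCommMonoid M]
    (F : (ι ⊕ Fin 2 → R) → M) :
    ∑ y, F y = ∑ x : ι → R, ∑ b, ∑ a, F (Sum.elim x ![a, b]) := by
  rw [← (Equiv.sumArrowEquivProdArrow ι (Fin 2) R).symm.sum_comp, Fintype.sum_prod_type]
  refine Finset.sum_congr rfl fun x _ => ?_
  rw [← (finTwoArrowEquiv R).symm.sum_comp, Fintype.sum_prod_type_right]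
  rfl

variable [Fintype ι] [DecidableEq ι] (A : Matrix ι ι (ZMod 2)) (u v q : ι → ZMod 2)

theorem matGaussSum_doubleBorder (c d e : ZMod 2) :
    matGaussSum (doubleBorder A u v u q c d e) =
      ∑ x, ∑ b : ZMod 2, if b * (c + d) = 0 then
        2 * zmodTwoSign (x ⬝ᵥ A *ᵥ x + b * ((v + q) ⬝ᵥ x + b * e)) else 0 := by
  change ∑ y, zmodTwoSign (y ⬝ᵥ doubleBorder A u v u q c d e *ᵥ y) = _
  simp only [sum_sumArrow_finTwo, dotProduct_doubleBorder_mulVec, add_dotProduct u,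
    CharTwo.add_self_eq_zero, mul_zero, add_zero, sum_zmodTwoSign_add_mul]

theorem matGaussSum_doubleBorder_of_ne {c d : ZMod 2} (hcd : c ≠ d) (e : ZMod 2) :
    matGaussSum (doubleBorder A u v u q c d e) = 2 * matGaussSum A := by
  have hcd' : c + d ≠ 0 := mt CharTwo.add_eq_zero.1 hcd
  rw [matGaussSum_doubleBorder]
  simp only [mul_eq_zero, hcd', or_false, Finset.sum_ite_eq', Finset.mem_univ,
    if_true, zero_mul, add_zero, ← Finset.mul_sum]
  rfl

theorem matGaussSum_doubleBorder_self (c : ZMod 2) :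
    matGaussSum (doubleBorder A u v u v c c 0) = 4 * matGaussSum A := by
  simp only [matGaussSum_doubleBorder, add_dotProduct, CharTwo.add_self_eq_zero, mul_zero, add_zero,
    if_true, Finset.sum_const, Finset.card_univ, ZMod.card, nsmul_eq_mul, ← Finset.mul_sum,
    ← mul_assoc]
  rfl

end Border

theorem natCast_zmodTwo_eq_iff_even_add (a b : ℕ) : (a : ZMod 2) = b ↔ Even (a + b) := by
  rw [← ZMod.natCast_eq_zero_iff_even, Nat.cast_add, CharTwo.add_eq_zero]

section BoolPairs

variable {α : Type*} (E : Finset α) (s t : α → Bool) (σ τ : Bool)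

theorem card_filter_eq_or_eq_not :
    (E.filter fun ε => (s ε = σ ∧ t ε = τ) ∨ (s ε = !σ ∧ t ε = !τ)).card =
      (E.filter fun ε => s ε = σ ∧ t ε = τ).card +
        (E.filter fun ε => s ε = !σ ∧ t ε = !τ).card := by
  classical
  rw [Finset.filter_or, Finset.card_union_of_disjoint]
  refine Finset.disjoint_filter.2 fun ε _ hpos hneg => ?_
  exact Bool.not_ne_self σ (hneg.1.symm.trans hpos.1)

variable {E s t σ τ}

theorem sum_boole_not_eq_sum_boole (hE : Even E.card) :
    ∑ ε ∈ E, (if s ε = !σ then (1 : ZMod 2) else 0) = ∑ ε ∈ E, if s ε = σ then 1 else 0 := by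
  simp only [Finset.sum_boole, Bool.eq_not]
  rw [natCast_zmodTwo_eq_iff_even_add, add_comm, Finset.card_filter_add_card_filter_not]
  exact hE

theorem sum_eq_zero_of_not_not_invariant {f : Bool → Bool → ZMod 2}
    (hf : ∀ a b, f a b = f (!a) (!b)) (hE : Even E.card)
    (heven : Even ((E.filter fun ε => s ε = σ ∧ t ε = τ).card +
      (E.filter fun ε => s ε = !σ ∧ t ε = !τ).card)) :
    ∑ ε ∈ E, f (s ε) (t ε) = 0 := by
  let P : α → Prop := fun ε => (s ε = σ ∧ t ε = τ) ∨ (s ε = !σ ∧ t ε = !τ)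
  have hP : Even (E.filter P).card := by rwa [card_filter_eq_or_eq_not]
  have hnotP : Even (E.filter fun ε => ¬ P ε).card := by
    rwa [← Finset.card_filter_add_card_filter_not P, Nat.even_add, iff_true_left hP] at hE
  have f_eq : ∀ ε, f (s ε) (t ε) = if P ε then f σ τ else f σ (!τ) := fun ε => by
    have hdiag := hf true true
    have hanti := hf true false
    simp only [P]
    generalize s ε = a, t ε = b
    cases a <;> cases b <;> cases σ <;> cases τ <;> simp_all
  simp only [f_eq, Finset.sum_ite, Finset.sum_const, nsmul_eq_mul,
    ZMod.natCast_eq_zero_iff_even.2 hP, ZMod.natCast_eq_zero_iff_even.2 hnotP, zero_mul, add_zero]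

theorem sum_eq_sum_not_not (g : Bool → Bool → ZMod 2) (hE : Even E.card)
    (heven : Even ((E.filter fun ε => s ε = σ ∧ t ε = τ).card +
      (E.filter fun ε => s ε = !σ ∧ t ε = !τ).card)) :
    ∑ ε ∈ E, g (s ε) (t ε) = ∑ ε ∈ E, g (!(s ε)) (!(t ε)) := by
  rw [← CharTwo.add_eq_zero, ← Finset.sum_add_distrib]
  refine sum_eq_zero_of_not_not_invariant (f := fun a b => g a b + g (!a) (!b)) ?_ hE heven
  intro a b
  simp only [Bool.not_not, add_comm]

theorem sum_boole_mul_boole :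
    ∑ ε ∈ E, (if s ε = σ then (1 : ZMod 2) else 0) * (if t ε = τ then 1 else 0) =
      (E.filter fun ε => s ε = σ ∧ t ε = τ).card := by
  simp only [ite_zero_mul_ite_zero, mul_one, Finset.sum_boole]

end BoolPairs

section MoveT5

variable {ι : Type*}

/-- The matrix `A'(ε)` of the move (T5), as a function of `A = A(ε)` and the two signs `a = ε_i` and
`b = ε_j`, with an arbitrary vector `χ` in place of the basis vector `χ(z₀)`. -/
def t5Matrix (σ τ : Bool) (χ : ι → ZMod 2) (ξ : Bool → Bool → ι → ZMod 2)
    (l : Bool → Bool → ZMod 2) (A : Matrix ι ι (ZMod 2)) (a b : Bool) :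
    Matrix (ι ⊕ Fin 2) (ι ⊕ Fin 2) (ZMod 2) :=
  doubleBorder A ((if a = !σ then (1 : ZMod 2) else 0) • χ) (ξ a b)
    ((if a = σ then (1 : ZMod 2) else 0) • χ) (ξ (!a) (!b))
    ((if a = σ then 1 else 0) * (if b = τ then 1 else 0))
    ((if a = !σ then 1 else 0) * (if b = !τ then 1 else 0)) (l a b)

variable {α : Type*} (s t : α → Bool) (σ τ : Bool) (χ : ι → ZMod 2)
  (ξ : Bool → Bool → ι → ZMod 2) (A : α → Matrix ι ι (ZMod 2)) {E : Finset α}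

theorem sum_t5Matrix (l : Bool → Bool → ZMod 2) (hE : Even E.card) :
    ∑ ε ∈ E, t5Matrix σ τ χ ξ l (A ε) (s ε) (t ε) =
      doubleBorder (∑ ε ∈ E, A ε) ((∑ ε ∈ E, if s ε = σ then (1 : ZMod 2) else 0) • χ)
        (∑ ε ∈ E, ξ (s ε) (t ε)) ((∑ ε ∈ E, if s ε = σ then (1 : ZMod 2) else 0) • χ)
        (∑ ε ∈ E, ξ (!(s ε)) (!(t ε)))
        (E.filter fun ε => s ε = σ ∧ t ε = τ).card (E.filter fun ε => s ε = !σ ∧ t ε = !τ).card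
        (∑ ε ∈ E, l (s ε) (t ε)) := by
  simp only [t5Matrix, sum_doubleBorder, ← Finset.sum_smul, sum_boole_not_eq_sum_boole hE,
    sum_boole_mul_boole]

theorem stmt18_general [Fintype ι] [DecidableEq ι] {l : Bool → Bool → ZMod 2}
    (hl : ∀ a b, l a b = l (!a) (!b)) (hE : Even E.card) :
    let A' := fun ε => t5Matrix σ τ χ ξ l (A ε) (s ε) (t ε)
    let ne := (E.filter fun ε => s ε = σ ∧ t ε = τ).card
                + (E.filter fun ε => s ε = !σ ∧ t ε = !τ).card
    (Even ne → matGaussSum (∑ ε ∈ E, A' ε) = 4 * matGaussSum (∑ ε ∈ E, A ε)) ∧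
    (¬ Even ne → matGaussSum (∑ ε ∈ E, A' ε) = 2 * matGaussSum (∑ ε ∈ E, A ε)) ∧
    Int.sign (matGaussSum (∑ ε ∈ E, A' ε)) = Int.sign (matGaussSum (∑ ε ∈ E, A ε)) := by
  intro A' ne
  have gauss_even (h : Even ne) :
      matGaussSum (∑ ε ∈ E, A' ε) = 4 * matGaussSum (∑ ε ∈ E, A ε) := by
    have sum_ξ : ∑ ε ∈ E, ξ (s ε) (t ε) = ∑ ε ∈ E, ξ (!(s ε)) (!(t ε)) := by
      ext x
      simpa only [Finset.sum_apply] using sum_eq_sum_not_not (fun a b => ξ a b x) hE h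
    rw [sum_t5Matrix s t σ τ χ ξ A l hE, sum_ξ, sum_eq_zero_of_not_not_invariant hl hE h,
      (natCast_zmodTwo_eq_iff_even_add _ _).2 h, matGaussSum_doubleBorder_self]
  have gauss_odd (h : ¬ Even ne) :
      matGaussSum (∑ ε ∈ E, A' ε) = 2 * matGaussSum (∑ ε ∈ E, A ε) := by
    rw [sum_t5Matrix s t σ τ χ ξ A l hE,
      matGaussSum_doubleBorder_of_ne _ _ _ _ (mt (natCast_zmodTwo_eq_iff_even_add _ _).1 h)]
  refine ⟨gauss_even, gauss_odd, ?_⟩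
  by_cases h : Even ne
  · rw [gauss_even h, Int.sign_mul]
    exact one_mul _
  · rw [gauss_odd h, Int.sign_mul]
    exact one_mul _

end MoveT5

/-- Effect of the move (T5) on generalized Seifert matrices: passing from `A(ε)` to
`A'(ε) = [[A(ε), δ(ε_i = ¬σ_i)·χ(z₀), ξ(ε_i, ε_j)],
          [δ(ε_i = σ_i)·χ(z₀)ᵀ, 0, δ(ε_i = σ_i)·δ(ε_j = σ_j)],
          [ξ(¬ε_i, ¬ε_j)ᵀ, δ(ε_i = ¬σ_i)·δ(ε_j = ¬σ_j), ℓ(ε_i, ε_j)]]`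
multiplies the Gauss sum `S^E` by `4` if `n_e` is even and by `2` if `n_e` is odd, where
`n_e = #{ε ∈ E : ε_i = σ_i, ε_j = σ_j} + #{ε ∈ E : ε_i = ¬σ_i, ε_j = ¬σ_j}`; in particular
`S^E(A')` and `S^E(A)` have the same sign. -/
theorem stmt18 (m n : ℕ) (i j : Fin m) (σi σj : Bool) (z₀ : Fin n)
    (ξ : Bool → Bool → Fin n → ZMod 2)
    (l : Bool → Bool → ZMod 2) (hl : ∀ a b, l a b = l (!a) (!b))
    (A : (Fin m → Bool) → Matrix (Fin n) (Fin n) (ZMod 2))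
    (E : Finset (Fin m → Bool)) (hE : Even E.card) :
    let χ : Fin n → ZMod 2 := fun x => if x = z₀ then 1 else 0
    let A' : (Fin m → Bool) → Matrix (Fin n ⊕ Fin 2) (Fin n ⊕ Fin 2) (ZMod 2) := fun ε =>
      Matrix.fromBlocks (A ε)
        (Matrix.of fun x (k : Fin 2) =>
          ![(if ε i = !σi then 1 else 0) * χ x, ξ (ε i) (ε j) x] k)
        (Matrix.of fun (k : Fin 2) x =>
          ![(if ε i = σi then 1 else 0) * χ x, ξ (!(ε i)) (!(ε j)) x] k)
        !![0, (if ε i = σi then 1 else 0) * (if ε j = σj then 1 else 0);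
           (if ε i = !σi then 1 else 0) * (if ε j = !σj then 1 else 0), l (ε i) (ε j)]
    let ne : ℕ := (E.filter (fun ε => ε i = σi ∧ ε j = σj)).card
                + (E.filter (fun ε => ε i = !σi ∧ ε j = !σj)).card
    (Even ne → famGaussSum E A' = 4 * famGaussSum E A) ∧
    (¬ Even ne → famGaussSum E A' = 2 * famGaussSum E A) ∧
    Int.sign (famGaussSum E A') = Int.sign (famGaussSum E A) :=
  stmt18_general (fun ε => ε i) (fun ε => ε j) σi σj _ ξ A hl hE
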